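/- arXiv:2604.23021 — 7 statements merged into one kernel-verified Lean document; each statement's English description precedes it below -/
import Mathlib

section
/- Let β ≥ 4 be a real number, n ≥ 2 an integer, and m a positive integer with m = βn/log n. Throw n balls independently and uniformly at random into m bins, and let X₀ be the number of empty bins. Then E[X₀] = m(1 − 1/m)ⁿ ≤ β·n^{1−1/β}/log n. -/
/-!
By linearity, the expectation is the sum over bins `j` of the probability that `j` stays empty;
exactly `(m - 1) ^ n` of the `m ^ n` outcomes avoid `j`, whence `m (1 - 1/m)^n`
(`sum_emptyBins`). For the bound, `1 - x ≤ exp (-x)` gives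
`(1 - 1/m)^n ≤ exp (-n/m) = exp (-(log n)/β) = n^(-1/β)`, since `n/m = (log n)/β`.
-/

/-- The number of empty bins when the `n` balls land in bins according to `ω`. -/
def emptyBins (n m : ℕ) (ω : Fin n → Fin m) : ℕ :=
  (Finset.univ.filter fun j : Fin m => ∀ i, ω i ≠ j).card

lemma card_avoid (n m : ℕ) (j : Fin m) :
    (Finset.univ.filter fun ω : Fin n → Fin m => ∀ i, ω i ≠ j).card = (m - 1) ^ n := by
  have h : (Finset.univ.filter fun ω : Fin n → Fin m => ∀ i, ω i ≠ j)
      = Fintype.piFinset fun _ : Fin n => Finset.univ.erase j := by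
    ext ω
    simp [Fintype.mem_piFinset]
  rw [h, Fintype.card_piFinset]
  simp

/-- Double counting of the pairs (outcome, empty bin). -/
lemma sum_emptyBins (n m : ℕ) :
    ∑ ω : Fin n → Fin m, emptyBins n m ω = m * (m - 1) ^ n := by
  simp only [emptyBins, Finset.card_filter]
  rw [Finset.sum_comm]
  simp only [← Finset.card_filter, card_avoid]
  simp

/-- Throwing `n` balls uniformly and independently into `m` bins (with `m = β n / log n`,
`β ≥ 4`), the expected number of empty bins equals `m (1 - 1/m)^n`, which is at most
`β n^{1 - 1/β} / log n`. Expectation is the average over all `m^n` equally likely outcomes. -/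
theorem stmt_0 (β : ℝ) (hβ : 4 ≤ β) (n m : ℕ) (hn : 2 ≤ n) (hm : 0 < m)
    (hmn : (m : ℝ) = β * n / Real.log n) :
    (∑ ω : Fin n → Fin m, (emptyBins n m ω : ℝ)) / (m : ℝ) ^ n
        = (m : ℝ) * (1 - 1 / (m : ℝ)) ^ n ∧
      (∑ ω : Fin n → Fin m, (emptyBins n m ω : ℝ)) / (m : ℝ) ^ n
        ≤ β * (n : ℝ) ^ ((1 : ℝ) - 1 / β) / Real.log n := by
  have hm0 : (0 : ℝ) < m := by exact_mod_cast hm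
  have hn0 : (0 : ℝ) < n := by exact_mod_cast (by omega : 0 < n)
  have hlog : 0 < Real.log n := Real.log_pos (by exact_mod_cast (by omega : 1 < n))
  have hβ0 : 0 < β := by linarith
  have heq : (∑ ω : Fin n → Fin m, (emptyBins n m ω : ℝ)) / (m : ℝ) ^ n
      = (m : ℝ) * (1 - 1 / (m : ℝ)) ^ n := by
    rw [← Nat.cast_sum, sum_emptyBins, Nat.cast_mul, Nat.cast_pow, Nat.cast_sub hm, Nat.cast_one,
      one_sub_div hm0.ne', div_pow, mul_div_assoc]
  refine ⟨heq, ?_⟩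
  have hratio : (n : ℝ) * (-(1 / (m : ℝ))) = Real.log n * (-(1 / β)) := by
    rw [hmn]
    field_simp
  have hle : (1 - 1 / (m : ℝ)) ^ n ≤ (n : ℝ) ^ (-(1 / β)) := by
    have h1 : (1 : ℝ) ≤ m := by exact_mod_cast hm
    -- `m ≥ 1` makes the base nonnegative, so the power is monotone in it.
    have h0 : 0 ≤ 1 - 1 / (m : ℝ) := sub_nonneg.2 ((div_le_one hm0).2 h1)
    calc (1 - 1 / (m : ℝ)) ^ n ≤ Real.exp (-(1 / (m : ℝ))) ^ n :=
          pow_le_pow_left₀ h0 (Real.one_sub_le_exp_neg _) n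
      _ = (n : ℝ) ^ (-(1 / β)) := by
          rw [← Real.exp_nat_mul, hratio, Real.rpow_def_of_pos hn0]
  calc _ = (m : ℝ) * (1 - 1 / (m : ℝ)) ^ n := heq
    _ ≤ m * (n : ℝ) ^ (-(1 / β)) := mul_le_mul_of_nonneg_left hle hm0.le
    _ = β * (n : ℝ) ^ ((1 : ℝ) - 1 / β) / Real.log n := by
        rw [hmn, sub_eq_add_neg, Real.rpow_add hn0, Real.rpow_one]
        ring
end

section
/- Let β ≥ 4 be a real number. There exists n₀ (depending on β) such that for every integer n ≥ n₀ and every positive integer m with m = βn/log n, if n balls are thrown independently and uniformly at random into m bins and X₀ denotes the number of empty bins, then E[X₀] ≥ β·n^{1−1/β}/(2 log n). -/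
lemma exp_mul_le_one_sub_pow (n : ℕ) (x : ℝ) (hx0 : 0 ≤ x) (hx1 : x ≤ 1) :
    Real.exp (-(n * x)) * (1 - n * x ^ 2) ≤ (1 - x) ^ n := by
  have hstep : Real.exp (-x) * (1 - x ^ 2) ≤ 1 - x := by
    have h1 : Real.exp (-x) * (1 + x) ≤ 1 := by
      have h := mul_le_mul_of_nonneg_left (Real.add_one_le_exp x) (Real.exp_pos (-x)).le
      rw [← Real.exp_add] at h
      simpa [add_comm] using h
    nlinarith
  have hsq : x ^ 2 ≤ 1 := pow_le_one₀ hx0 hx1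
  have hbern : 1 - n * x ^ 2 ≤ (1 - x ^ 2) ^ n := by
    have h := one_add_mul_le_pow (a := -x ^ 2) (by linarith) n
    rw [← sub_eq_add_neg] at h
    linarith [h]
  calc Real.exp (-(n * x)) * (1 - n * x ^ 2)
      ≤ Real.exp (-(n * x)) * (1 - x ^ 2) ^ n := by gcongr
    _ = (Real.exp (-x) * (1 - x ^ 2)) ^ n := by
        rw [mul_pow, ← Real.exp_nat_mul, mul_neg]
    _ ≤ (1 - x) ^ n :=
        pow_le_pow_left₀ (mul_nonneg (Real.exp_pos _).le (by linarith)) hstep n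

lemma log_sq_le (x : ℝ) (hx : 1 ≤ x) : Real.log x ^ 2 ≤ 4 * x := by
  have h := Real.log_le_self (Real.sqrt_nonneg x)
  rw [Real.log_sqrt (by linarith)] at h
  have h0 := Real.log_nonneg hx
  have hs := Real.sq_sqrt (show (0 : ℝ) ≤ x by linarith)
  nlinarith [Real.sqrt_nonneg x]

/-- For `β ≥ 4`, for all sufficiently large `n`, throwing `n` balls uniformly and independently
into `m = β n / log n` bins, the expected number of empty bins is at least
`β n^{1 - 1/β} / (2 log n)`. Expectation is the average over all `m^n` equally likely outcomes. -/
theorem stmt_1 (β : ℝ) (hβ : 4 ≤ β) :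
    ∃ n₀ : ℕ, ∀ n : ℕ, n₀ ≤ n → ∀ m : ℕ, 0 < m →
      (m : ℝ) = β * n / Real.log n →
      β * (n : ℝ) ^ ((1 : ℝ) - 1 / β) / (2 * Real.log n)
        ≤ (∑ ω : Fin n → Fin m, (emptyBins n m ω : ℝ)) / (m : ℝ) ^ n := by
  refine ⟨2, fun n hn m hm hmn => ?_⟩
  have hn2 : (2 : ℝ) ≤ n := by exact_mod_cast hn
  have hn0 : (0 : ℝ) < n := by linarith
  have hlog : 0 < Real.log n := Real.log_pos (by linarith)
  have hm1 : (1 : ℝ) ≤ m := by exact_mod_cast hm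
  have hm0 : (0 : ℝ) < m := by linarith
  have hβ0 : 0 < β := by linarith
  have hE : (∑ ω : Fin n → Fin m, (emptyBins n m ω : ℝ)) / (m : ℝ) ^ n
      = m * (1 - 1 / (m : ℝ)) ^ n := by
    rw [← Nat.cast_sum, sum_emptyBins, Nat.cast_mul, Nat.cast_pow, Nat.cast_sub hm, mul_div_assoc,
      ← div_pow, sub_div, div_self hm0.ne', Nat.cast_one]
  have hratio : n * (1 / (m : ℝ)) = Real.log n / β := by
    rw [hmn]
    field_simp
  have hsmall : n * (1 / (m : ℝ)) ^ 2 ≤ 1 / 2 := by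
    have h : n * (1 / (m : ℝ)) ^ 2 = Real.log n ^ 2 / (β ^ 2 * n) := by
      rw [hmn]
      field_simp
    rw [h, div_le_iff₀ (by positivity)]
    have := log_sq_le n (by linarith)
    have hβ2 : 16 ≤ β ^ 2 := by nlinarith
    nlinarith [mul_le_mul_of_nonneg_right hβ2 hn0.le]
  have hL : β * (n : ℝ) ^ ((1 : ℝ) - 1 / β) / (2 * Real.log n)
      = m * (Real.exp (-(n * (1 / (m : ℝ)))) * (1 / 2)) := by
    have hpow : (n : ℝ) ^ ((1 : ℝ) - 1 / β) = n * Real.exp (-(Real.log n / β)) := by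
      rw [sub_eq_add_neg, Real.rpow_add hn0, Real.rpow_one, Real.rpow_def_of_pos hn0 (-(1 / β))]
      congr 2
      ring
    rw [hratio, hpow, hmn]
    field_simp
  rw [hE, hL]
  refine mul_le_mul_of_nonneg_left (le_trans ?_ (exp_mul_le_one_sub_pow n (1 / (m : ℝ))
    (by positivity) ((div_le_one hm0).2 hm1))) hm0.le
  gcongr
  linarith
end

section
/- Let n and m be positive integers. Throw n balls independently and uniformly at random into m bins, and let X₀ be the number of empty bins. Then for every λ > 0, Pr[|X₀ − E[X₀]| ≥ λ√n] ≤ 2·exp(−λ²/8). -/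
/-!
The proof is the bounded-differences (Azuma) argument for the exposure of the balls one at a time,
carried out on finite sums.

* Moving one ball changes the number of empty bins by at most `1`, hence by at most `2`
  (`abs_emptyBins_update_sub_le`).
* A centred function `g` on `m` points with `|g| ≤ 2` satisfies
  `𝔼 exp (t g) ≤ cosh (2 t) ≤ exp (2 t²)`: on `[-2, 2]` the convex function `exp (t x)` lies below
  its chord, and the linear part of the chord averages to zero (`sum_exp_le_of_sum_eq_zero`).
* Averaging out all balls but the first preserves the bounded difference property, so induction on
  the number of balls gives `𝔼 exp (t (f - 𝔼 f)) ≤ exp (2 n t²)` for every `f` whose differences are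
  bounded by `2` (`sum_exp_sub_mean_le`).
* Markov's inequality with `t = λ / (4 √n)`, applied to `f` and `-f`, bounds each tail by
  `exp (-λ² / 8)`.
-/

open scoped Classical

/-- The expected number of empty bins: the average over all `m^n` equally likely outcomes. -/
noncomputable def expEmptyBins (n m : ℕ) : ℝ :=
  (∑ ω : Fin n → Fin m, (emptyBins n m ω : ℝ)) / (m : ℝ) ^ n

/-- The chord bound for `exp (t x)` on `[-2, 2]`: the right-hand side is the affine function of `x`
that agrees with `exp (t x)` at `x = ±2`. -/
lemma exp_mul_le_chord (t x : ℝ) (hx : |x| ≤ 2) :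
    Real.exp (t * x) ≤ Real.cosh (2 * t) + x / 2 * Real.sinh (2 * t) := by
  obtain ⟨h1, h2⟩ := abs_le.mp hx
  have h := convexOn_exp.2 (Set.mem_univ (2 * t)) (Set.mem_univ (-(2 * t)))
    (show 0 ≤ (2 + x) / 4 by linarith) (show 0 ≤ (2 - x) / 4 by linarith) (by ring)
  simp only [smul_eq_mul] at h
  rw [Real.cosh_eq, Real.sinh_eq]
  calc Real.exp (t * x)
      = Real.exp ((2 + x) / 4 * (2 * t) + (2 - x) / 4 * -(2 * t)) := by ring_nf
    _ ≤ _ := h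
    _ = _ := by ring

lemma sum_exp_le_of_sum_eq_zero (m : ℕ) (g : Fin m → ℝ) (h0 : ∑ a, g a = 0)
    (hg : ∀ a, |g a| ≤ 2) (t : ℝ) :
    ∑ a, Real.exp (t * g a) ≤ m * Real.exp (2 * t ^ 2) := by
  calc ∑ a, Real.exp (t * g a)
      ≤ ∑ a, (Real.cosh (2 * t) + g a / 2 * Real.sinh (2 * t)) :=
        Finset.sum_le_sum fun a _ => exp_mul_le_chord t (g a) (hg a)
    _ = m * Real.cosh (2 * t) := by
        rw [Finset.sum_add_distrib, ← Finset.sum_mul, ← Finset.sum_div, h0]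
        simp
    _ ≤ m * Real.exp (2 * t ^ 2) := by
        have h := Real.cosh_le_exp_half_sq (2 * t)
        rw [show (2 * t) ^ 2 / 2 = 2 * t ^ 2 by ring] at h
        gcongr

lemma sum_fin_succ_fun (n m : ℕ) (f : (Fin (n + 1) → Fin m) → ℝ) :
    ∑ ω, f ω = ∑ a : Fin m, ∑ ω : Fin n → Fin m, f (Fin.cons a ω) := by
  rw [← Fintype.sum_prod_type']
  exact (Fintype.sum_equiv (Fin.consEquiv fun _ => Fin m) _ _ fun _ => rfl).symm

/-- A function on `m` points whose values differ pairwise by at most `2` stays within `2` of its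
mean. -/
lemma abs_sub_mean_le (m : ℕ) (hm : 0 < m) (g : Fin m → ℝ) (hg : ∀ a b, |g a - g b| ≤ 2)
    (a : Fin m) : |g a - (∑ b, g b) / m| ≤ 2 := by
  have hm' : (0 : ℝ) < m := by exact_mod_cast hm
  have h : g a - (∑ b, g b) / m = (∑ b, (g a - g b)) / m := by
    rw [Finset.sum_sub_distrib]
    simp
    field_simp
  rw [h, abs_div, abs_of_pos hm', div_le_iff₀ hm']
  calc |∑ b, (g a - g b)| ≤ ∑ b, |g a - g b| := Finset.abs_sum_le_sum_abs _ _
    _ ≤ ∑ _b : Fin m, (2 : ℝ) := Finset.sum_le_sum fun b _ => hg a b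
    _ = 2 * m := by simp [mul_comm]

/-- The moment generating function bound behind Azuma's inequality, for a function on `(Fin m)ⁿ`
that changes by at most `2` when one coordinate is changed. -/
lemma sum_exp_sub_mean_le (m : ℕ) (hm : 0 < m) (t : ℝ) (n : ℕ) (f : (Fin n → Fin m) → ℝ)
    (hf : ∀ ω i a, |f (Function.update ω i a) - f ω| ≤ 2) :
    ∑ ω, Real.exp (t * (f ω - (∑ η, f η) / (m : ℝ) ^ n))
      ≤ (m : ℝ) ^ n * Real.exp (2 * n * t ^ 2) := by
  have hm' : (0 : ℝ) < m := by exact_mod_cast hm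
  induction n with
  | zero => simp
  | succ n ih =>
    -- `g a` is the conditional expectation of `f` given that the first ball lands in bin `a`.
    set g : Fin m → ℝ := fun a => (∑ ω : Fin n → Fin m, f (Fin.cons a ω)) / (m : ℝ) ^ n with hgdef
    have hmean : (∑ η, f η) / (m : ℝ) ^ (n + 1) = (∑ a, g a) / m := by
      rw [sum_fin_succ_fun, hgdef, ← Finset.sum_div, div_div, pow_succ]
    have hg : ∀ a b, |g a - g b| ≤ 2 := by
      intro a b
      have hpow : (0 : ℝ) < (m : ℝ) ^ n := by positivity
      rw [hgdef]
      simp only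
      rw [← sub_div, ← Finset.sum_sub_distrib, abs_div, abs_of_pos hpow, div_le_iff₀ hpow]
      calc |∑ ω : Fin n → Fin m, (f (Fin.cons a ω) - f (Fin.cons b ω))|
          ≤ ∑ ω : Fin n → Fin m, |f (Fin.cons a ω) - f (Fin.cons b ω)| :=
            Finset.abs_sum_le_sum_abs _ _
        _ ≤ ∑ _ω : Fin n → Fin m, (2 : ℝ) := by
            refine Finset.sum_le_sum fun ω _ => ?_
            have h := hf (Fin.cons b ω) 0 a
            rwa [Fin.update_cons_zero] at h
        _ = 2 * (m : ℝ) ^ n := by simp [mul_comm]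
    have hstep : ∑ a, Real.exp (t * (g a - (∑ b, g b) / m)) ≤ m * Real.exp (2 * t ^ 2) := by
      refine sum_exp_le_of_sum_eq_zero m (fun a => g a - (∑ b, g b) / m) ?_
        (abs_sub_mean_le m hm g hg) t
      rw [Finset.sum_sub_distrib]
      simp
      field_simp
      simp
    rw [hmean, sum_fin_succ_fun]
    calc ∑ a, ∑ ω : Fin n → Fin m, Real.exp (t * (f (Fin.cons a ω) - (∑ b, g b) / m))
        = ∑ a, Real.exp (t * (g a - (∑ b, g b) / m)) *
            ∑ ω : Fin n → Fin m, Real.exp (t * (f (Fin.cons a ω) - g a)) := by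
          refine Finset.sum_congr rfl fun a _ => ?_
          rw [Finset.mul_sum]
          refine Finset.sum_congr rfl fun ω _ => ?_
          rw [← Real.exp_add]
          ring_nf
      _ ≤ ∑ a, Real.exp (t * (g a - (∑ b, g b) / m)) *
            ((m : ℝ) ^ n * Real.exp (2 * n * t ^ 2)) := by
          refine Finset.sum_le_sum fun a _ => ?_
          refine mul_le_mul_of_nonneg_left ?_ (Real.exp_pos _).le
          refine ih (fun ω => f (Fin.cons a ω)) fun ω i b => ?_
          have h := hf (Fin.cons a ω) i.succ b
          rwa [← Fin.cons_update] at h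
      _ ≤ (m * Real.exp (2 * t ^ 2)) * ((m : ℝ) ^ n * Real.exp (2 * n * t ^ 2)) := by
          rw [← Finset.sum_mul]
          gcongr
      _ = (m : ℝ) ^ (n + 1) * Real.exp (2 * (n + 1 : ℕ) * t ^ 2) := by
          rw [show (2 * (n + 1 : ℕ) * t ^ 2 : ℝ) = 2 * t ^ 2 + 2 * n * t ^ 2 by push_cast; ring,
            Real.exp_add]
          ring

/-- The one-sided Azuma bound for a function with differences bounded by `2`. -/
lemma card_upper_tail_le (m : ℕ) (hm : 0 < m) (n : ℕ) (hn : 0 < n) (f : (Fin n → Fin m) → ℝ)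
    (hf : ∀ ω i a, |f (Function.update ω i a) - f ω| ≤ 2) (lam : ℝ) (hl : 0 < lam) :
    ((Finset.univ.filter fun ω : Fin n → Fin m =>
        lam * Real.sqrt n ≤ f ω - (∑ η, f η) / (m : ℝ) ^ n).card : ℝ)
      ≤ (m : ℝ) ^ n * Real.exp (-lam ^ 2 / 8) := by
  have hs : 0 < Real.sqrt n := Real.sqrt_pos.mpr (by exact_mod_cast hn)
  have hsq : Real.sqrt n ^ 2 = n := Real.sq_sqrt (Nat.cast_nonneg n)
  -- The minimiser of the exponent `2 n t² - t λ √n`.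
  set t : ℝ := lam / (4 * Real.sqrt n) with ht
  have htpos : 0 < t := by positivity
  have hts : t * Real.sqrt n = lam / 4 := by
    rw [ht]
    field_simp
  have hnt : 2 * (n : ℝ) * t ^ 2 = lam ^ 2 / 8 := by
    rw [← hsq, show 2 * Real.sqrt n ^ 2 * t ^ 2 = 2 * (t * Real.sqrt n) ^ 2 by ring, hts]
    ring
  have hmgf := sum_exp_sub_mean_le m hm t n f hf
  set μ : ℝ := (∑ η, f η) / (m : ℝ) ^ n
  set S := Finset.univ.filter fun ω : Fin n → Fin m => lam * Real.sqrt n ≤ f ω - μ with hS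
  have hmarkov : (S.card : ℝ) * Real.exp (lam ^ 2 / 4) ≤ ∑ ω, Real.exp (t * (f ω - μ)) := by
    calc (S.card : ℝ) * Real.exp (lam ^ 2 / 4) = ∑ _ω ∈ S, Real.exp (lam ^ 2 / 4) := by simp
      _ ≤ ∑ ω ∈ S, Real.exp (t * (f ω - μ)) := by
          refine Finset.sum_le_sum fun ω hω => Real.exp_le_exp.mpr ?_
          have hmem : lam * Real.sqrt n ≤ f ω - μ := (Finset.mem_filter.mp hω).2
          calc lam ^ 2 / 4 = t * (lam * Real.sqrt n) := by
                rw [show t * (lam * Real.sqrt n) = lam * (t * Real.sqrt n) by ring, hts]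
                ring
            _ ≤ t * (f ω - μ) := mul_le_mul_of_nonneg_left hmem htpos.le
      _ ≤ ∑ ω, Real.exp (t * (f ω - μ)) :=
          Finset.sum_le_sum_of_subset_of_nonneg (Finset.subset_univ _)
            fun _ _ _ => (Real.exp_pos _).le
  rw [hnt] at hmgf
  have h := hmarkov.trans hmgf
  rw [← le_div_iff₀ (Real.exp_pos _), mul_div_assoc, ← Real.exp_sub] at h
  rwa [show lam ^ 2 / 8 - lam ^ 2 / 4 = -lam ^ 2 / 8 by ring] at h

lemma emptyBins_update_le (n m : ℕ) (ω : Fin n → Fin m) (i : Fin n) (a : Fin m) :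
    emptyBins n m (Function.update ω i a) ≤ emptyBins n m ω + 1 := by
  unfold emptyBins
  -- The only bin that can become empty is the one that ball `i` leaves.
  refine le_trans (Finset.card_le_card (t := insert (ω i)
    (Finset.univ.filter fun j : Fin m => ∀ k, ω k ≠ j)) ?_) (Finset.card_insert_le _ _)
  intro j hj
  simp only [Finset.mem_filter, Finset.mem_univ, true_and, Finset.mem_insert] at hj ⊢
  by_cases hji : j = ω i
  · exact Or.inl hji
  · refine Or.inr fun k => ?_
    by_cases hk : k = i
    · subst hk
      exact fun h => hji h.symm
    · have h := hj k
      rwa [Function.update_of_ne hk] at h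

lemma abs_emptyBins_update_sub_le (n m : ℕ) (ω : Fin n → Fin m) (i : Fin n) (a : Fin m) :
    |(emptyBins n m (Function.update ω i a) : ℝ) - emptyBins n m ω| ≤ 2 := by
  have h1 := emptyBins_update_le n m ω i a
  have h2 := emptyBins_update_le n m (Function.update ω i a) i (ω i)
  rw [Function.update_idem, Function.update_eq_self] at h2
  have h1' : (emptyBins n m (Function.update ω i a) : ℝ) ≤ emptyBins n m ω + 1 := by
    exact_mod_cast h1
  have h2' : (emptyBins n m ω : ℝ) ≤ emptyBins n m (Function.update ω i a) + 1 := by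
    exact_mod_cast h2
  rw [abs_le]
  constructor <;> linarith

/-- Throwing `n` balls uniformly and independently into `m` bins, the number `X₀` of empty
bins satisfies `Pr[|X₀ - E[X₀]| ≥ λ √n] ≤ 2 exp(-λ²/8)`; probability is the fraction of the
`m^n` equally likely outcomes for which the event holds. -/
theorem stmt_2 (n m : ℕ) (hn : 0 < n) (hm : 0 < m) (lam : ℝ) (hl : 0 < lam) :
    ((Finset.univ.filter fun ω : Fin n → Fin m =>
          lam * Real.sqrt n ≤ |(emptyBins n m ω : ℝ) - expEmptyBins n m|).card : ℝ)
        / (m : ℝ) ^ n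
      ≤ 2 * Real.exp (-lam ^ 2 / 8) := by
  have hpow : (0 : ℝ) < (m : ℝ) ^ n := by positivity
  have hup := card_upper_tail_le m hm n hn (fun ω => (emptyBins n m ω : ℝ))
    (abs_emptyBins_update_sub_le n m) lam hl
  have hlow := card_upper_tail_le m hm n hn (fun ω => -(emptyBins n m ω : ℝ))
    (fun ω i a => by
      rw [neg_sub_neg, abs_sub_comm]
      exact abs_emptyBins_update_sub_le n m ω i a) lam hl
  rw [Finset.sum_neg_distrib, neg_div] at hlow
  change ((Finset.univ.filter fun ω : Fin n → Fin m =>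
    lam * Real.sqrt n ≤ (emptyBins n m ω : ℝ) - expEmptyBins n m).card : ℝ) ≤ _ at hup
  change ((Finset.univ.filter fun ω : Fin n → Fin m =>
    lam * Real.sqrt n ≤ -(emptyBins n m ω : ℝ) - -expEmptyBins n m).card : ℝ) ≤ _ at hlow
  rw [div_le_iff₀ hpow]
  simp only [le_abs]
  rw [Finset.filter_or]
  refine le_trans (Nat.cast_le.mpr (Finset.card_union_le _ _)) ?_
  push_cast
  simp only [neg_sub]
  simp only [neg_sub_neg] at hlow
  linarith
end

section
/- Let β ≥ 4 be a real number. There exists n₀ (depending on β) such that for every integer n ≥ n₀ and every positive integer m with m = βn/log n, if n balls are thrown independently and uniformly at random into m bins and X₁ denotes the number of bins containing exactly one ball, then E[X₁] = n(1 − 1/m)^{n−1} and n^{1−1/β}/2 ≤ E[X₁] ≤ 2·n^{1−1/β}. -/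
/-!
Linearity of expectation over pairs (ball `i`, bin `j`): ball `i` is the only one in bin `j` in
exactly `(m - 1) ^ (n - 1)` of the `m ^ n` outcomes, so the singleton bins total
`n * m * (m - 1) ^ (n - 1)` (`sum_singletonBins`), which gives the exact formula.

For the bounds, `m = β n / log n` means `log n / β = n / m`, hence `n ^ (1 - 1/β) = n * exp (-n/m)`,
and it remains to compare `(1 - 1/m) ^ (n - 1)` with `exp (-n/m)` up to a factor `2`
(`pow_le_two_mul_exp`, `half_exp_le_pow`). These follow from
`exp (-1/(m-1)) ≤ 1 - 1/m ≤ exp (-1/m)`; the lower bound also needs `n ≤ m (m - 1) / 2`, which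
holds because `log n ≤ 2 √n` forces `m ≥ 2 √n`. All of this works from `n₀ = 2` on.
-/

/-- The number of bins containing exactly one ball, when the `n` balls land according to `ω`. -/
def singletonBins (n m : ℕ) (ω : Fin n → Fin m) : ℕ :=
  (Finset.univ.filter fun j : Fin m =>
    (Finset.univ.filter fun i : Fin n => ω i = j).card = 1).card

/-- Ball `i` is forced into bin `j`, and each other ball avoids `j` freely, so the outcomes in which
`i` is the only ball in bin `j` form a product set. -/
lemma card_only_ball (n m : ℕ) (i : Fin n) (j : Fin m) :
    (Finset.univ.filter fun ω : Fin n → Fin m =>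
      (Finset.univ.filter fun k : Fin n => ω k = j) = {i}).card = (m - 1) ^ (n - 1) := by
  have h : (Finset.univ.filter fun ω : Fin n → Fin m =>
      (Finset.univ.filter fun k : Fin n => ω k = j) = {i})
      = Fintype.piFinset fun k : Fin n => if k = i then {j} else {j}ᶜ := by
    ext ω
    simp only [Finset.mem_filter, Finset.mem_univ, true_and, Fintype.mem_piFinset,
      Finset.ext_iff, Finset.mem_singleton]
    refine forall_congr' fun k => ?_
    by_cases hk : k = i <;> simp [hk]
  rw [h, Fintype.card_piFinset, ← Finset.mul_prod_erase _ _ (Finset.mem_univ i)]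
  rw [Finset.prod_congr rfl (g := fun _ => m - 1)]
  · simp
  · intro k hk
    simp [Finset.ne_of_mem_erase hk, Finset.card_compl]

lemma sum_singletonBins (n m : ℕ) :
    ∑ ω : Fin n → Fin m, singletonBins n m ω = n * m * (m - 1) ^ (n - 1) := by
  have h : ∀ ω : Fin n → Fin m, singletonBins n m ω = ∑ j : Fin m, ∑ i : Fin n,
      if (Finset.univ.filter fun k : Fin n => ω k = j) = {i} then 1 else 0 := by
    intro ω
    rw [singletonBins, Finset.card_filter]
    refine Finset.sum_congr rfl fun j _ => ?_
    split_ifs with hc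
    · obtain ⟨a, ha⟩ := Finset.card_eq_one.1 hc
      simp [ha]
    · symm
      refine Finset.sum_eq_zero fun i _ => if_neg fun hi => hc ?_
      rw [hi, Finset.card_singleton]
  simp_rw [h]
  rw [Finset.sum_comm]
  have h2 : ∀ j : Fin m, (∑ ω : Fin n → Fin m, ∑ i : Fin n,
      if (Finset.univ.filter fun k : Fin n => ω k = j) = {i} then 1 else 0)
      = n * (m - 1) ^ (n - 1) := by
    intro j
    rw [Finset.sum_comm]
    simp_rw [← Finset.card_filter, card_only_ball]
    simp
  simp_rw [h2]
  simp
  ring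

lemma pow_le_two_mul_exp (n : ℕ) (m : ℝ) (hn : 1 ≤ n) (hm : 2 ≤ m) :
    (1 - 1 / m) ^ (n - 1) ≤ 2 * Real.exp (-(n / m)) := by
  have hm0 : 0 < m := by linarith
  have hinv : 1 / m ≤ 1 / 2 := one_div_le_one_div_of_le two_pos hm
  have h1 : 1 - 1 / m ≤ Real.exp (-(1 / m)) := by
    have := Real.add_one_le_exp (-(1 / m)); linarith
  have hlog := Real.log_two_gt_d9
  calc (1 - 1 / m) ^ (n - 1) ≤ Real.exp (-(1 / m)) ^ (n - 1) :=
        pow_le_pow_left₀ (by linarith) h1 _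
    _ = Real.exp (1 / m + -(n / m)) := by
        rw [← Real.exp_nat_mul, Nat.cast_sub hn]; congr 1; push_cast; ring
    _ ≤ Real.exp (Real.log 2 + -(n / m)) := Real.exp_le_exp.2 (by linarith)
    _ = 2 * Real.exp (-(n / m)) := by rw [Real.exp_add, Real.exp_log two_pos]

lemma half_exp_le_pow (n : ℕ) (m : ℝ) (hn : 1 ≤ n) (hm : 2 ≤ m)
    (hnm : n ≤ m * (m - 1) / 2) :
    Real.exp (-(n / m)) / 2 ≤ (1 - 1 / m) ^ (n - 1) := by
  have hm0 : 0 < m := by linarith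
  have hm1 : 0 < m - 1 := by linarith
  -- `1 / (1 - 1/m) = 1 + 1/(m-1) ≤ exp (1/(m-1))`
  have h1 : Real.exp (-(1 / (m - 1))) ≤ 1 - 1 / m := by
    have h := Real.add_one_le_exp (1 / (m - 1))
    have e : 1 / (m - 1) + 1 = (1 - 1 / m)⁻¹ := by
      have : 1 - 1 / m = (m - 1) / m := by field_simp
      rw [this, inv_div]; field_simp; ring
    have hp : 0 < (1 - 1 / m)⁻¹ := by rw [← e]; positivity
    rw [e] at h
    rw [Real.exp_neg]
    exact inv_le_of_inv_le₀ (inv_pos.1 hp) h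
  have hlog := Real.log_two_gt_d9
  have key : (n - 1) / (m - 1) ≤ n / m + 1 / 2 := by
    rw [← sub_nonneg]
    have : n / m + 1 / 2 - (n - 1) / (m - 1) = (m * (m - 1) / 2 - n + m) / (m * (m - 1)) := by
      field_simp; ring
    rw [this]
    exact div_nonneg (by linarith) (by positivity)
  calc Real.exp (-(n / m)) / 2 = Real.exp (-(n / m) - Real.log 2) := by
        rw [Real.exp_sub, Real.exp_log two_pos]
    _ ≤ Real.exp (-((n - 1) / (m - 1))) := Real.exp_le_exp.2 (by linarith)
    _ = Real.exp (-(1 / (m - 1))) ^ (n - 1) := by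
        rw [← Real.exp_nat_mul, Nat.cast_sub hn]; congr 1; push_cast; ring
    _ ≤ _ := pow_le_pow_left₀ (Real.exp_pos _).le h1 _

/-- For `β ≥ 4`, for all sufficiently large `n`, throwing `n` balls uniformly and independently
into `m = β n / log n` bins, the expected number of bins with exactly one ball equals
`n (1 - 1/m)^{n-1}` and lies between `n^{1-1/β}/2` and `2 n^{1-1/β}`. Expectation is the
average over all `m^n` equally likely outcomes. -/
theorem stmt_4 (β : ℝ) (hβ : 4 ≤ β) :
    ∃ n₀ : ℕ, ∀ n : ℕ, n₀ ≤ n → ∀ m : ℕ, 0 < m →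
      (m : ℝ) = β * n / Real.log n →
      (∑ ω : Fin n → Fin m, (singletonBins n m ω : ℝ)) / (m : ℝ) ^ n
          = (n : ℝ) * (1 - 1 / (m : ℝ)) ^ (n - 1) ∧
        (n : ℝ) ^ ((1 : ℝ) - 1 / β) / 2
          ≤ (∑ ω : Fin n → Fin m, (singletonBins n m ω : ℝ)) / (m : ℝ) ^ n ∧
        (∑ ω : Fin n → Fin m, (singletonBins n m ω : ℝ)) / (m : ℝ) ^ n
          ≤ 2 * (n : ℝ) ^ ((1 : ℝ) - 1 / β) := by
  refine ⟨2, fun n hn m hm hmβ => ?_⟩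
  have hm0 : (0 : ℝ) < m := Nat.cast_pos.2 hm
  have hn2 : (2 : ℝ) ≤ n := by exact_mod_cast hn
  have hn0 : (0 : ℝ) < n := by linarith
  have hlog : 0 < Real.log n := Real.log_pos (by linarith)
  have hβ0 : 0 < β := by linarith
  have hE : (∑ ω : Fin n → Fin m, (singletonBins n m ω : ℝ)) / (m : ℝ) ^ n
      = (n : ℝ) * (1 - 1 / (m : ℝ)) ^ (n - 1) := by
    rw [← Nat.cast_sum, sum_singletonBins]
    push_cast [Nat.cast_sub (Nat.one_le_of_lt hm)]
    have e : 1 - 1 / (m : ℝ) = (m - 1) / m := by field_simp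
    obtain ⟨k, rfl⟩ : ∃ k, n = k + 1 := ⟨n - 1, by omega⟩
    rw [e, div_pow, Nat.add_sub_cancel, pow_succ]
    field_simp
  have hmlog : (m : ℝ) * Real.log n = β * n := by rw [hmβ]; field_simp
  have hpow : (n : ℝ) ^ ((1 : ℝ) - 1 / β) = n * Real.exp (-(n / m)) := by
    have e : (n : ℝ) / m = Real.log n * (1 / β) := by
      field_simp; linarith
    rw [Real.rpow_sub hn0, Real.rpow_one, e, Real.exp_neg, Real.rpow_def_of_pos hn0,
      div_eq_mul_inv]
  -- `log n = 2 log √n ≤ 2 √n` gives the crude lower bound `m ≥ 2 √n`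
  have hs0 : 0 < √(n : ℝ) := Real.sqrt_pos.2 hn0
  have hss : √(n : ℝ) * √(n : ℝ) = n := Real.mul_self_sqrt hn0.le
  have hlogs : Real.log n ≤ 2 * √(n : ℝ) := by
    have h := Real.log_le_sub_one_of_pos hs0
    rw [Real.log_sqrt hn0.le] at h
    linarith
  have hms : 2 * √(n : ℝ) ≤ m := by
    have h : 4 * (√(n : ℝ) * √(n : ℝ)) ≤ m * (2 * √(n : ℝ)) := by
      rw [hss]
      calc 4 * (n : ℝ) ≤ β * n := by gcongr
        _ = m * Real.log n := hmlog.symm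
        _ ≤ _ := by gcongr
    nlinarith
  have hs1 : 1 ≤ √(n : ℝ) := Real.one_le_sqrt.2 (by linarith)
  have hm2 : (2 : ℝ) ≤ m := by linarith
  have hnm : (n : ℝ) ≤ m * (m - 1) / 2 := by nlinarith
  have hup := pow_le_two_mul_exp n m (by omega) hm2
  have hlo := half_exp_le_pow n m (by omega) hm2 hnm
  refine ⟨hE, ?_, ?_⟩
  · rw [hE, hpow, mul_div_assoc]
    gcongr
  · rw [hE, hpow, mul_left_comm]
    gcongr
end

section
/- Let c > 1 be a real constant. There exists n₀ (depending on c) such that for every integer n ≥ n₀ the following holds. Let P = {p₁,…,pₙ} be n points chosen independently and uniformly at random from the flat unit torus T², and let A = max over p ∈ P of μ(Vor(p,P)) be the area of the largest cell in the Voronoi diagram of P. Then Pr[A ≥ 4c·(log n)/n] ≤ n^{4−2c}. -/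
open MeasureTheory

/-!
A Voronoi cell of area at least `a = 4c (log n)/n` does not fit into a sup-norm ball of radius
slightly below `√a / 2` around its site `p`, since the area of that ball is less than `a`. So the
cell has a point `x` at distance more than `s` from `p`, where `s` is just below `√a / 2`, and no
site is closer to `x` than `p` is. Hence no site lies in the Euclidean disc of radius `s` about
`x`, nor in the axis-parallel square inscribed in it, whose area is about `a / 2`.

Rounding `x` down to a point of the `n × n` grid costs only `1/n` in the half side, so
some grid-centred square of half side `h = √(a/8) - 2/n` contains no site (`exists_empty_square`).
For a fixed grid point this has probability at most `(1 - 4h²)ⁿ ≤ exp (-4nh²) ≤ n^(2 - 2c)`, and the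
union bound over the `n²` grid points gives `n^(4 - 2c)`.
-/

instance : Fact ((0 : ℝ) < 1) := ⟨one_pos⟩

/-- The flat unit torus `T² = (ℝ/ℤ)²`. -/
abbrev T2 : Type := AddCircle (1 : ℝ) × AddCircle (1 : ℝ)

/-- The torus distance on `T²`: the Euclidean combination of the quotient distances on the
two coordinates. -/
noncomputable def dT (p q : T2) : ℝ :=
  Real.sqrt (dist p.1 q.1 ^ 2 + dist p.2 q.2 ^ 2)

/-- The Voronoi cell of `p` with respect to the site set `P`, in the torus metric. -/
def vor (p : T2) (P : Set T2) : Set T2 :=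
  {x | ∀ q ∈ P, dT x p ≤ dT x q}

lemma T2_dist_le_dT (x p : T2) : dist x p ≤ dT x p := by
  rw [Prod.dist_eq, dT]
  apply max_le <;> apply Real.le_sqrt_of_sq_le <;>
    nlinarith [sq_nonneg (dist x.1 p.1), sq_nonneg (dist x.2 p.2)]

lemma dT_le_sqrt_two_mul_dist (x p : T2) : dT x p ≤ √2 * dist x p := by
  have h1 : dist x.1 p.1 ≤ dist x p := le_max_left _ _
  have h2 : dist x.2 p.2 ≤ dist x p := le_max_right _ _
  rw [dT, Real.sqrt_le_left (by positivity), mul_pow, Real.sq_sqrt (by norm_num)]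
  nlinarith [pow_le_pow_left₀ dist_nonneg h1 2, pow_le_pow_left₀ dist_nonneg h2 2]

lemma volume_T2_closedBall (x : T2) {r : ℝ} (hr : 0 ≤ r) :
    volume (Metric.closedBall x r) = ENNReal.ofReal ((min 1 (2 * r)) ^ 2) := by
  rw [← Prod.mk.eta (p := x), ← closedBall_prod_same, Measure.volume_eq_prod, Measure.prod_prod,
    AddCircle.volume_closedBall, AddCircle.volume_closedBall,
    ← ENNReal.ofReal_mul (le_min zero_le_one (by positivity)), sq]

instance : IsProbabilityMeasure (volume : Measure (AddCircle (1 : ℝ))) :=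
  ⟨by rw [AddCircle.measure_univ, ENNReal.ofReal_one]⟩

/-- The point `(i/n, j/n)` of the torus. -/
noncomputable def gridPoint (n : ℕ) (g : Fin n × Fin n) : T2 :=
  ((((g.1 : ℕ) : ℝ) / n : ℝ), (((g.2 : ℕ) : ℝ) / n : ℝ))

lemma exists_grid_circle {n : ℕ} (hn : 0 < n) (x : AddCircle (1 : ℝ)) :
    ∃ i : Fin n, dist x ((((i : ℕ) : ℝ) / n : ℝ) : AddCircle (1 : ℝ)) ≤ 1 / n := by
  have hn' : (0 : ℝ) < n := by exact_mod_cast hn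
  obtain ⟨y, hy, rfl⟩ : ∃ y : ℝ, y ∈ Set.Ico (0 : ℝ) (0 + 1) ∧ (y : AddCircle (1 : ℝ)) = x := by
    have := AddCircle.coe_image_Ico_eq (1 : ℝ) 0
    have hx : x ∈ ((↑) : ℝ → AddCircle (1 : ℝ)) '' Set.Ico (0 : ℝ) (0 + 1) := by
      rw [this]; trivial
    exact hx
  have h0 : 0 ≤ y * n := mul_nonneg hy.1 hn'.le
  have hlt : ⌊y * n⌋₊ < n := by
    rw [Nat.floor_lt h0]
    nlinarith [hy.2]
  refine ⟨⟨_, hlt⟩, ?_⟩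
  rw [dist_eq_norm, ← AddCircle.coe_sub]
  refine (QuotientAddGroup.norm_mk_le_norm).trans ?_
  rw [Real.norm_eq_abs, abs_le]
  have h1 := Nat.floor_le h0
  have h2 := Nat.lt_floor_add_one (y * n)
  have e : y - (⌊y * n⌋₊ : ℝ) / n = (y * n - ⌊y * n⌋₊) / n := by field_simp
  simp only [e]
  constructor
  · have : 0 ≤ (y * n - ⌊y * n⌋₊) / n := div_nonneg (by linarith) hn'.le
    have : (0 : ℝ) ≤ 1 / n := by positivity
    linarith
  · gcongr
    linarith

lemma exists_grid {n : ℕ} (hn : 0 < n) (x : T2) :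
    ∃ g, dist x (gridPoint n g) ≤ 1 / n := by
  obtain ⟨i, hi⟩ := exists_grid_circle hn x.1
  obtain ⟨j, hj⟩ := exists_grid_circle hn x.2
  exact ⟨(i, j), max_le hi hj⟩

/-- A large Voronoi cell forces a grid-centred square of half side `h` free of sites. The
hypothesis `8 * (h + 1/n)^2 < a` says that the sup-norm ball of radius `√2 * (h + 1/n)` has area
less than `a`. -/
lemma exists_empty_square {n : ℕ} (hn : 0 < n) {a h : ℝ} (hh : 0 ≤ h)
    (ha : 8 * (h + 1 / n) ^ 2 < a) (ω : Fin n → T2) (i : Fin n)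
    (hi : ENNReal.ofReal a ≤ volume (vor (ω i) (Set.range ω))) :
    ∃ g, ∀ j, ω j ∉ Metric.closedBall (gridPoint n g) h := by
  have hs : 0 ≤ √2 * (h + 1 / n) := by positivity
  have h2 : √2 ^ 2 = (2 : ℝ) := Real.sq_sqrt (by norm_num)
  have hsub : ¬ vor (ω i) (Set.range ω) ⊆ Metric.closedBall (ω i) (√2 * (h + 1 / n)) := by
    intro hsub
    have := hi.trans (measure_mono hsub)
    rw [volume_T2_closedBall _ hs, ENNReal.ofReal_le_ofReal_iff (sq_nonneg _)] at this
    have h3 : (min 1 (2 * (√2 * (h + 1 / n)))) ^ 2 ≤ (2 * (√2 * (h + 1 / n))) ^ 2 :=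
      pow_le_pow_left₀ (le_min zero_le_one (by positivity)) (min_le_right _ _) 2
    rw [mul_pow, mul_pow, h2] at h3
    linarith
  obtain ⟨x, hx, hxs⟩ := Set.not_subset.1 hsub
  rw [Metric.mem_closedBall, not_le] at hxs
  obtain ⟨g, hg⟩ := exists_grid hn x
  refine ⟨g, fun j hj => ?_⟩
  rw [Metric.mem_closedBall] at hj
  have h4 : dist x (ω j) ≤ h + 1 / n := by
    have := dist_triangle x (gridPoint n g) (ω j)
    rw [dist_comm (gridPoint n g)] at this
    linarith
  have h5 := hx (ω j) ⟨j, rfl⟩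
  have h6 : √2 * dist x (ω j) ≤ √2 * (h + 1 / n) := by gcongr
  linarith [T2_dist_le_dT x (ω i), dT_le_sqrt_two_mul_dist x (ω j)]

lemma volume_compl_square_le (x : T2) {h : ℝ} (hh : 0 ≤ h) :
    volume (Metric.closedBall x h)ᶜ ≤ ENNReal.ofReal (Real.exp (-(4 * h ^ 2))) := by
  rw [prob_compl_eq_one_sub Metric.isClosed_closedBall.measurableSet, volume_T2_closedBall _ hh,
    ← ENNReal.ofReal_one, ← ENNReal.ofReal_sub _ (sq_nonneg _)]
  apply ENNReal.ofReal_le_ofReal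
  rcases le_total 1 (2 * h) with h1 | h1
  · rw [min_eq_left h1]
    simpa using (Real.exp_pos _).le
  · rw [min_eq_right h1]
    have := Real.add_one_le_exp (-(4 * h ^ 2))
    nlinarith

lemma prob_empty_square_le (n : ℕ) (x : T2) {h : ℝ} (hh : 0 ≤ h) :
    (Measure.pi fun _ : Fin n => (volume : Measure T2))
        {ω | ∀ j, ω j ∉ Metric.closedBall x h}
      ≤ ENNReal.ofReal (Real.exp (-(n * (4 * h ^ 2)))) := by
  have e : {ω : Fin n → T2 | ∀ j, ω j ∉ Metric.closedBall x h}
      = Set.univ.pi fun _ => (Metric.closedBall x h)ᶜ := by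
    ext ω; simp [Set.mem_pi]
  rw [e, Measure.pi_pi, Finset.prod_const, Finset.card_univ, Fintype.card_fin]
  refine (pow_le_pow_left₀ zero_le (volume_compl_square_le x hh) n).trans ?_
  rw [← ENNReal.ofReal_pow (Real.exp_pos _).le, ← Real.exp_nat_mul, mul_neg]

/-- For `c > 1` and all sufficiently large `n`: if `n` points are chosen independently and
uniformly from the flat unit torus, the probability that the largest Voronoi cell has area
at least `4c (log n)/n` is at most `n^{4 - 2c}`. -/
theorem stmt_9 (c : ℝ) (hc : 1 < c) :
    ∃ n₀ : ℕ, ∀ n : ℕ, n₀ ≤ n →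
      (Measure.pi fun _ : Fin n => (volume : Measure T2))
          {ω : Fin n → T2 |
            ENNReal.ofReal (4 * c * Real.log n / n) ≤
              ⨆ i : Fin n, volume (vor (ω i) (Set.range ω))}
        ≤ ENNReal.ofReal ((n : ℝ) ^ ((4 : ℝ) - 2 * c)) := by
  refine ⟨⌈32 * c⌉₊, fun n hn => ?_⟩
  have hn1 : 32 * c ≤ n := Nat.ceil_le.1 hn
  have hnpos : (0 : ℝ) < n := by linarith
  have hn0 : 0 < n := by exact_mod_cast hnpos
  have : Nonempty (Fin n) := ⟨⟨0, hn0⟩⟩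
  have hlog : 1 ≤ Real.log n := by
    rw [Real.le_log_iff_exp_le hnpos]
    linarith [Real.exp_one_lt_d9]
  -- `v = √(a/8)` for `a = 4c (log n)/n`; the inscribed square of area `a/2` has half side `v`.
  obtain ⟨v, hv0, hv⟩ : ∃ v : ℝ, 0 ≤ v ∧ v ^ 2 = c * Real.log n / (2 * n) :=
    ⟨√(c * Real.log n / (2 * n)), Real.sqrt_nonneg _, Real.sq_sqrt (by positivity)⟩
  have hv' : v ^ 2 * (2 * n) = c * Real.log n := by rw [hv]; field_simp
  have hvlow : 2 / (n : ℝ) ≤ v := by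
    refine (sq_le_sq₀ (by positivity) hv0).1 ?_
    rw [hv, div_pow, div_le_div_iff₀ (by positivity) (by positivity)]
    nlinarith [mul_le_mul hc.le hlog zero_le_one (by linarith), mul_pos hnpos hnpos]
  have hvup : v ≤ Real.log n / 8 := by
    refine (sq_le_sq₀ hv0 (by linarith)).1 ?_
    rw [hv, div_pow, div_le_div_iff₀ (by positivity) (by positivity)]
    have h1 : 32 * c * Real.log n ≤ n * Real.log n ^ 2 := by
      rw [sq, ← mul_assoc]
      have := mul_le_mul_of_nonneg_right hn1 (show 0 ≤ Real.log n by linarith)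
      exact this.trans (le_mul_of_one_le_right (by positivity) hlog)
    nlinarith
  have hh : 0 ≤ v - 2 / n := by linarith
  have hinv : 0 < 1 / (n : ℝ) := by positivity
  have h21 : 2 / (n : ℝ) = 2 * (1 / n) := by ring
  have hsub : {ω : Fin n → T2 | ENNReal.ofReal (4 * c * Real.log n / n) ≤
      ⨆ i : Fin n, volume (vor (ω i) (Set.range ω))} ⊆
      ⋃ g, {ω | ∀ j, ω j ∉ Metric.closedBall (gridPoint n g) (v - 2 / n)} := by
    intro ω hω
    obtain ⟨i, hi⟩ := exists_eq_ciSup_of_finite (f := fun i => volume (vor (ω i) (Set.range ω)))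
    rw [Set.mem_ofPred_eq, ← hi] at hω
    refine Set.mem_iUnion.2 (exists_empty_square hn0 hh ?_ ω i hω)
    have : 4 * c * Real.log n / n = 8 * v ^ 2 := by rw [hv]; ring
    rw [this]
    have : v - 2 / n + 1 / n < v := by linarith
    have := pow_lt_pow_left₀ this (by linarith) two_ne_zero
    linarith
  -- `4nh² ≥ 4nv² - 16v ≥ 2c log n - 2 log n`
  have hexp : Real.exp (-(n * (4 * (v - 2 / n) ^ 2))) ≤ (n : ℝ) ^ (2 - 2 * c) := by
    rw [Real.rpow_def_of_pos hnpos]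
    apply Real.exp_le_exp.2
    have e : n * (4 * (v - 2 / n) ^ 2) = 2 * (v ^ 2 * (2 * n)) - 16 * v + 16 * (1 / n) := by
      field_simp; ring
    rw [e, hv']
    linarith
  calc _ ≤ _ := measure_mono hsub
    _ ≤ ∑ g, _ := measure_iUnion_fintype_le _ _
    _ ≤ ∑ _g : Fin n × Fin n, ENNReal.ofReal ((n : ℝ) ^ (2 - 2 * c)) :=
        Finset.sum_le_sum fun g _ =>
          (prob_empty_square_le n _ hh).trans (ENNReal.ofReal_le_ofReal hexp)
    _ = ENNReal.ofReal ((n : ℝ) ^ ((4 : ℝ) - 2 * c)) := by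
        rw [Finset.sum_const, Finset.card_univ, Fintype.card_prod, Fintype.card_fin,
          ← ENNReal.ofReal_nsmul, nsmul_eq_mul]
        congr 1
        rw [show (4 : ℝ) - 2 * c = 2 + (2 - 2 * c) by ring, Real.rpow_add hnpos, Real.rpow_two]
        push_cast; ring
end

section
/- Let C ⊆ ℝ² be an axis-aligned square of side length ℓ > 0, and for a point p ∈ C let D_p = {x ∈ C : dist(x,p) ≤ dist(x, ∂C)} be the set of points of C at least as close to p as to the boundary ∂C of C. If p is chosen uniformly at random from C, then Pr[area(D_p)/area(C) ≥ 1/15] ≥ 1/15. -/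
/-!
After scaling to `ℓ = 1`, let `p` be any point at distance at least `7/20` from all four sides.
Every `x` in the axis-aligned square of half-side `13/100` around `p` satisfies
`dist(x, p) ≤ √2 · 13/100 < 22/100 = 7/20 - 13/100 ≤ dist(x, ∂C)`,
so this small square lies in `D_p`, and its area is `(26/100)² ≥ 1/15`.
The admissible points `p` themselves form a square of side `3/10`, of area `9/100 ≥ 1/15`.
-/

open MeasureTheory

/-- Euclidean distance on `ℝ × ℝ`. -/
noncomputable def distE (x y : ℝ × ℝ) : ℝ :=
  Real.sqrt ((x.1 - y.1) ^ 2 + (x.2 - y.2) ^ 2)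

/-- The axis-aligned square with bottom-left corner `a` and side length `ℓ`. -/
def square (a : ℝ × ℝ) (ℓ : ℝ) : Set (ℝ × ℝ) :=
  Set.Icc a.1 (a.1 + ℓ) ×ˢ Set.Icc a.2 (a.2 + ℓ)

/-- The Euclidean distance from a point to a set (used for the boundary `∂C`). -/
noncomputable def distBd (x : ℝ × ℝ) (S : Set (ℝ × ℝ)) : ℝ :=
  sInf (distE x '' S)

/-- `D_p`: the set of points of the square that are at least as close to `p` as to the
boundary of the square. -/
noncomputable def Dcell (a : ℝ × ℝ) (ℓ : ℝ) (p : ℝ × ℝ) : Set (ℝ × ℝ) :=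
  {x ∈ square a ℓ | distE x p ≤ distBd x (frontier (square a ℓ))}

lemma volume_square (a : ℝ × ℝ) (ℓ : ℝ) (hℓ : 0 ≤ ℓ) :
    volume (square a ℓ) = ENNReal.ofReal (ℓ ^ 2) := by
  rw [square, Measure.volume_eq_prod, Measure.prod_prod, Real.volume_Icc, Real.volume_Icc,
    ← ENNReal.ofReal_mul (by linarith)]
  congr 1
  ring

/-- Both area bounds are obtained from this: a set containing a square of side `m` with
`15 m² ≥ ℓ²` fills at least a fifteenth of a square of side `ℓ`. -/
lemma fifteenth_le_of_square_subset {a b : ℝ × ℝ} {ℓ m : ℝ} (hℓ : 0 < ℓ) (hm : 0 ≤ m)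
    (h : ℓ ^ 2 ≤ 15 * m ^ 2) {S : Set (ℝ × ℝ)} (hS : square b m ⊆ S) :
    (1 : ENNReal) / 15 ≤ volume S / volume (square a ℓ) := by
  have hpos : 0 < ℓ ^ 2 := by positivity
  calc (1 : ENNReal) / 15 = ENNReal.ofReal (1 / 15) := by
        rw [ENNReal.ofReal_div_of_pos (by norm_num)]
        simp
    _ ≤ ENNReal.ofReal (m ^ 2 / ℓ ^ 2) := by
        apply ENNReal.ofReal_le_ofReal
        rw [div_le_div_iff₀ (by norm_num) hpos]
        linarith
    _ = volume (square b m) / volume (square a ℓ) := by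
        rw [ENNReal.ofReal_div_of_pos hpos, volume_square b m hm, volume_square a ℓ hℓ.le]
    _ ≤ volume S / volume (square a ℓ) := by gcongr

lemma frontier_square (a : ℝ × ℝ) (ℓ : ℝ) (hℓ : 0 < ℓ) :
    frontier (square a ℓ) =
      Set.Icc a.1 (a.1 + ℓ) ×ˢ {a.2, a.2 + ℓ} ∪ {a.1, a.1 + ℓ} ×ˢ Set.Icc a.2 (a.2 + ℓ) := by
  rw [square, frontier_prod_eq, frontier_Icc (by linarith), frontier_Icc (by linarith),
    isClosed_Icc.closure_eq, isClosed_Icc.closure_eq]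

lemma le_distBd_frontier_square {a x : ℝ × ℝ} {ℓ r : ℝ} (hℓ : 0 < ℓ) (hr : 0 ≤ r)
    (hx : x ∈ square (a.1 + r, a.2 + r) (ℓ - 2 * r)) :
    r ≤ distBd x (frontier (square a ℓ)) := by
  obtain ⟨⟨h1, h2⟩, h3, h4⟩ := hx
  simp only at h1 h2 h3 h4
  rw [distBd, frontier_square a ℓ hℓ]
  apply le_csInf
  · exact Set.Nonempty.image _ ⟨a, Or.inl ⟨⟨le_rfl, by linarith⟩, Or.inl rfl⟩⟩
  · rintro _ ⟨y, hy, rfl⟩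
    apply Real.le_sqrt_of_sq_le
    rcases hy with ⟨-, hy | hy⟩ | ⟨hy | hy, -⟩
    · rw [hy]
      nlinarith [sq_nonneg (x.1 - y.1)]
    · rw [hy]
      nlinarith [sq_nonneg (x.1 - y.1)]
    · rw [hy]
      nlinarith [sq_nonneg (x.2 - y.2)]
    · rw [hy]
      nlinarith [sq_nonneg (x.2 - y.2)]

lemma square_subset_Dcell {a p : ℝ × ℝ} {ℓ : ℝ} (hℓ : 0 < ℓ)
    (hp : p ∈ square (a.1 + 7 / 20 * ℓ, a.2 + 7 / 20 * ℓ) (3 / 10 * ℓ)) :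
    square (p.1 - 13 / 100 * ℓ, p.2 - 13 / 100 * ℓ) (26 / 100 * ℓ) ⊆ Dcell a ℓ p := by
  obtain ⟨⟨p1, p2⟩, p3, p4⟩ := hp
  rintro x ⟨⟨x1, x2⟩, x3, x4⟩
  simp only at p1 p2 p3 p4 x1 x2 x3 x4
  refine ⟨⟨⟨by linarith, by linarith⟩, by linarith, by linarith⟩, ?_⟩
  refine le_trans ?_ (le_distBd_frontier_square (r := 22 / 100 * ℓ) hℓ (by positivity)
    ⟨⟨?_, ?_⟩, ?_, ?_⟩)
  · apply Real.sqrt_le_iff.mpr ⟨by positivity, ?_⟩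
    have e1 : (x.1 - p.1) ^ 2 ≤ (13 / 100 * ℓ) ^ 2 := sq_le_sq' (by linarith) (by linarith)
    have e2 : (x.2 - p.2) ^ 2 ≤ (13 / 100 * ℓ) ^ 2 := sq_le_sq' (by linarith) (by linarith)
    nlinarith
  all_goals
    simp only
    linarith

/-- For a point `p` chosen uniformly at random in an axis-aligned square `C` of side `ℓ > 0`,
with probability at least `1/15` the region `D_p` of points closer to `p` than to `∂C`
occupies at least a `1/15` fraction of the area of `C`. -/
theorem stmt_10 (a : ℝ × ℝ) (ℓ : ℝ) (hℓ : 0 < ℓ) :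
    (1 : ENNReal) / 15 ≤
      volume {p ∈ square a ℓ |
          (1 : ENNReal) / 15 ≤ volume (Dcell a ℓ p) / volume (square a ℓ)}
        / volume (square a ℓ) := by
  refine fifteenth_le_of_square_subset (b := (a.1 + 7 / 20 * ℓ, a.2 + 7 / 20 * ℓ))
    (m := 3 / 10 * ℓ) hℓ (by positivity) (by nlinarith) ?_
  intro p hp
  refine ⟨?_, fifteenth_le_of_square_subset hℓ (by positivity) (by nlinarith)
    (square_subset_Dcell hℓ hp)⟩
  obtain ⟨⟨p1, p2⟩, p3, p4⟩ := hp
  simp only at p1 p2 p3 p4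
  exact ⟨⟨by linarith, by linarith⟩, by linarith, by linarith⟩
end

section
/- There exist constants γ > 0, c₁ > 0, and n₀ such that for every integer n ≥ n₀ the following holds. Let P be a set of n points chosen independently and uniformly at random from the flat unit torus T². Then with probability at least 1 − n^{−4}, there are at least √n/30 points p ∈ P such that simultaneously: (i) the closed ball of radius c₁·√((log n)/n) centered at p contains no point of P other than p, and (ii) μ(Vor(p,P)) ≥ γ·(log n)/n. -/
/-!
Fix `R = √(log n / n) / 8` and call a point isolated if every other point is at distance more than
`R` from it in the sup metric on the torus, which is at most `dT` and at least `dT / 2`. An isolated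
point satisfies condition (i), and its Voronoi cell contains the sup-metric ball of radius `R / 4`,
of area `R² / 4 = log n / (256 n)`, which is condition (ii) (`isoCount_le_ncard`). So it suffices to
have many isolated points.

A given point is isolated with probability `(1 - 4 R²) ^ (n - 1) ≥ exp (-log n / 8)`, hence the mean
number of isolated points is at least `n ^ (7/8)` (`integral_isoCount`), far above `√n / 30`. Moving
one point changes that number by at most `10`, because a ball of radius `R` contains at most `9`
points that are pairwise more than `R` apart (`packing`, `abs_isoCount_update_sub_le`). McDiarmid's
bounded-difference inequality (`exp_bounded_differences`, `lower_tail`) therefore bounds the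
probability of having at most `√n / 30` isolated points by `exp (-n ^ (3/4) / 800)`, which is at most
`n ^ (-4)` once `n ≥ 8 ^ 8` (`tail_bound`).
-/

open MeasureTheory

/-! ### Bounded-difference concentration -/

/-- McDiarmid's inequality at the level of the moment generating function: if changing one
coordinate changes `f` by at most `C`, then `f` of independent coordinates is sub-Gaussian with
variance proxy `n C²`. Integrating out the first coordinate keeps the bounded differences of the
remaining function `g`, and Hoeffding's lemma on that coordinate costs a factor
`exp (l² C² / 2)`. -/
theorem exp_bounded_differences {Ω : Type*} [MeasurableSpace Ω] (μ : Measure Ω)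
    [IsProbabilityMeasure μ] (C l : ℝ) (hC : 0 ≤ C) :
    ∀ (n : ℕ) (f : (Fin n → Ω) → ℝ), Measurable f → (∃ B, ∀ ω, |f ω| ≤ B) →
      (∀ ω i x, |f (Function.update ω i x) - f ω| ≤ C) →
      ∫ ω, Real.exp (l * (f ω - ∫ ω', f ω' ∂(Measure.pi fun _ => μ)))
        ∂(Measure.pi fun _ => μ) ≤ Real.exp (n * (l ^ 2 * C ^ 2 / 2)) := by
  intro n
  induction n with
  | zero =>
    intro f _ _ _
    simp [integral_unique]
  | succ n ih =>
    intro f hf hfB hfC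
    obtain ⟨B, hB⟩ := hfB
    have hne : Nonempty Ω := by
      by_contra h
      rw [not_nonempty_iff] at h
      exact (IsProbabilityMeasure.ne_zero μ) (Measure.eq_zero_of_isEmpty μ)
    obtain ⟨x₀⟩ := hne
    have mp := (measurePreserving_piFinSuccAbove (fun _ : Fin (n + 1) => μ) 0).symm
    have key : ∀ F : (Fin (n + 1) → Ω) → ℝ,
        ∫ ω, F ω ∂(Measure.pi fun _ => μ) =
          ∫ z : Ω × (Fin n → Ω), F (Fin.cons z.1 z.2) ∂(μ.prod (Measure.pi fun _ => μ)) := by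
      intro F
      rw [← mp.integral_comp']
      congr 1
      funext z
      simp [MeasurableEquiv.piFinSuccAbove, Fin.insertNthEquiv]
    have hcons : Measurable fun z : Ω × (Fin n → Ω) => (Fin.cons z.1 z.2 : Fin (n + 1) → Ω) := by
      refine measurable_pi_iff.2 fun i => ?_
      refine Fin.cases ?_ (fun j => ?_) i
      · simpa using measurable_fst
      · simpa [Function.comp_def] using (measurable_pi_apply j).comp measurable_snd
    have hbd : ∀ {α : Type _} [MeasurableSpace α] (ν : Measure α) [IsFiniteMeasure ν] (F : α → ℝ)
        (D : ℝ), Measurable F → (∀ a, |F a| ≤ D) → Integrable F ν := by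
      intro α _ ν _ F D hF hD
      exact Integrable.of_bound hF.aestronglyMeasurable D (Filter.Eventually.of_forall hD)
    have hh : Measurable fun z : Ω × (Fin n → Ω) => f (Fin.cons z.1 z.2) := hf.comp hcons
    set g : (Fin n → Ω) → ℝ := fun y => ∫ x, f (Fin.cons x y) ∂μ with hg
    have hgm : Measurable g := by
      exact (StronglyMeasurable.integral_prod_left' hh.stronglyMeasurable).measurable
    have hgB : ∀ y, |g y| ≤ B := by
      intro y
      have := norm_integral_le_of_norm_le_const (μ := μ) (f := fun x => f (Fin.cons x y)) (C := B)
        (Filter.Eventually.of_forall fun x => hB _)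
      simpa using this
    have hhx : ∀ y, Measurable fun x => f (Fin.cons x y) := fun y =>
      hh.comp (measurable_id.prodMk measurable_const)
    have hgC : ∀ y i x, |g (Function.update y i x) - g y| ≤ C := by
      intro y i x
      rw [hg]
      simp only
      rw [← integral_sub (hbd _ _ B (hhx _) fun _ => hB _) (hbd _ _ B (hhx _) fun _ => hB _)]
      have := norm_integral_le_of_norm_le_const (μ := μ)
        (f := fun a => f (Fin.cons a (Function.update y i x)) - f (Fin.cons a y)) (C := C)
        (Filter.Eventually.of_forall fun a => by
          rw [Fin.cons_update]; exact hfC _ _ _)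
      simpa using this
    have hfg : ∫ ω, f ω ∂(Measure.pi fun _ => μ) = ∫ y, g y ∂(Measure.pi fun _ => μ) := by
      rw [key, integral_prod_symm _ (hbd _ _ B hh fun _ => hB _)]
    set m := ∫ y, g y ∂(Measure.pi fun _ => μ) with hm
    rw [key, hfg]
    have hexpb : ∀ a b : ℝ, |a| ≤ B → |b| ≤ B →
        |Real.exp (l * (a - b))| ≤ Real.exp (|l| * (2 * B)) := by
      intro a b ha hb
      rw [Real.abs_exp, Real.exp_le_exp]
      refine (le_abs_self _).trans ?_
      rw [abs_mul]
      refine mul_le_mul_of_nonneg_left ?_ (abs_nonneg _)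
      linarith [abs_sub a b]
    have hmB : |m| ≤ B := by
      have := norm_integral_le_of_norm_le_const (μ := Measure.pi fun _ : Fin n => μ) (f := g)
        (C := B) (Filter.Eventually.of_forall fun x => hgB _)
      simpa using this
    rw [integral_prod_symm _ (hbd _ _ (Real.exp (|l| * (2 * B)))
      (((hh.sub_const m).const_mul l).exp) fun z => hexpb _ _ (hB _) hmB)]
    have hinner : ∀ y : Fin n → Ω, ∫ x, Real.exp (l * (f (Fin.cons x y) - m)) ∂μ ≤
        Real.exp (l ^ 2 * C ^ 2 / 2) * Real.exp (l * (g y - m)) := by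
      intro y
      have hs := ProbabilityTheory.hasSubgaussianMGF_of_mem_Icc (μ := μ)
        (X := fun x => f (Fin.cons x y)) (a := f (Fin.cons x₀ y) - C) (b := f (Fin.cons x₀ y) + C)
        (hhx y).aemeasurable (Filter.Eventually.of_forall fun x => by
          have := abs_le.1 (hfC (Fin.cons x₀ y) 0 x)
          rw [Fin.update_cons_zero] at this
          constructor <;> linarith [this.1, this.2])
      have h2 := hs.mgf_le l
      rw [ProbabilityTheory.mgf] at h2
      have h3 : ∀ x, Real.exp (l * (f (Fin.cons x y) - m)) =
          Real.exp (l * (f (Fin.cons x y) - g y)) * Real.exp (l * (g y - m)) := by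
        intro x
        rw [← Real.exp_add]
        ring_nf
      simp_rw [h3]
      rw [integral_mul_const]
      refine mul_le_mul_of_nonneg_right (h2.trans (le_of_eq ?_)) (Real.exp_pos _).le
      congr 1
      push_cast
      have : f (Fin.cons x₀ y) + C - (f (Fin.cons x₀ y) - C) = 2 * C := by ring
      rw [this, Real.norm_of_nonneg (by positivity)]
      ring
    calc _ ≤ ∫ y, Real.exp (l ^ 2 * C ^ 2 / 2) * Real.exp (l * (g y - m))
          ∂(Measure.pi fun _ : Fin n => μ) := by
          refine integral_mono ?_ ?_ hinner
          · exact (hbd _ _ (Real.exp (|l| * (2 * B)))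
              (((hh.sub_const m).const_mul l).exp) fun z => hexpb _ _ (hB _) hmB).integral_prod_right
          · exact (hbd _ _ (Real.exp (|l| * (2 * B)))
              (((hgm.sub_const m).const_mul l).exp) fun z => hexpb _ _ (hgB _) hmB).const_mul _
      _ ≤ Real.exp (l ^ 2 * C ^ 2 / 2) * Real.exp (n * (l ^ 2 * C ^ 2 / 2)) := by
          rw [integral_const_mul]
          exact mul_le_mul_of_nonneg_left (ih g hgm ⟨B, hgB⟩ hgC) (Real.exp_pos _).le
      _ = _ := by
          rw [← Real.exp_add]
          push_cast
          ring_nf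

/-- Chernoff's bound for the lower tail of a function with bounded differences, with the exponential
parameter `l` left free. -/
theorem lower_tail {Ω : Type*} [MeasurableSpace Ω] (μ : Measure Ω)
    [IsProbabilityMeasure μ] (C : ℝ) (hC : 0 ≤ C) (n : ℕ) (f : (Fin n → Ω) → ℝ)
    (hf : Measurable f) (B : ℝ) (hB : ∀ ω, |f ω| ≤ B)
    (hfC : ∀ ω i x, |f (Function.update ω i x) - f ω| ≤ C) (a l : ℝ) (hl : 0 ≤ l) :
    (Measure.pi fun _ : Fin n => μ).real {ω | f ω ≤ a} ≤
      Real.exp (n * (l ^ 2 * C ^ 2 / 2) - l * (∫ ω, f ω ∂(Measure.pi fun _ => μ) - a)) := by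
  set ν := Measure.pi fun _ : Fin n => μ
  set m := ∫ ω, f ω ∂ν
  have h := exp_bounded_differences μ C (-l) hC n f hf ⟨B, hB⟩ hfC
  have h1 := ProbabilityTheory.measure_le_le_exp_mul_mgf (μ := ν) (X := fun ω => f ω - m)
    (t := -l) (a - m) (by linarith) (by
      refine Integrable.of_bound (((hf.sub_const m).const_mul (-l)).exp.aestronglyMeasurable)
        (Real.exp (|l| * (B + |m|))) (Filter.Eventually.of_forall fun ω => ?_)
      rw [Real.norm_eq_abs, Real.abs_exp, Real.exp_le_exp]
      refine (le_abs_self _).trans ?_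
      rw [abs_mul, abs_neg]
      refine mul_le_mul_of_nonneg_left ?_ (abs_nonneg _)
      linarith [abs_sub (f ω) m, hB ω])
  simp only [sub_le_sub_iff_right] at h1
  refine h1.trans ?_
  rw [show n * (l ^ 2 * C ^ 2 / 2) - l * (m - a) = - -l * (a - m) + n * (l ^ 2 * C ^ 2 / 2) by ring,
    Real.exp_add]
  refine mul_le_mul_of_nonneg_left ?_ (Real.exp_pos _).le
  simpa [ProbabilityTheory.mgf] using h

/-! ### The torus -/

instance isProbabilityMeasure_circle : IsProbabilityMeasure (volume : Measure (AddCircle (1 : ℝ))) :=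
  ⟨by rw [AddCircle.measure_univ]; simp⟩

instance isProbabilityMeasure_T2 : IsProbabilityMeasure (volume : Measure T2) := by
  rw [Measure.volume_eq_prod]; infer_instance

theorem volume_closedBall_T2 (p : T2) (r : ℝ) (hr : 0 ≤ r) (hr' : 2 * r ≤ 1) :
    volume (Metric.closedBall p r) = ENNReal.ofReal (4 * r ^ 2) := by
  obtain ⟨a, b⟩ := p
  rw [← closedBall_prod_same, Measure.volume_eq_prod, Measure.prod_prod,
    AddCircle.volume_closedBall, AddCircle.volume_closedBall, min_eq_right hr',
    ← ENNReal.ofReal_mul (by positivity)]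
  ring_nf

theorem dist_le_dT (p q : T2) : dist p q ≤ dT p q := by
  rw [Prod.dist_eq, dT]
  refine max_le (Real.le_sqrt_of_sq_le ?_) (Real.le_sqrt_of_sq_le ?_)
  · nlinarith [sq_nonneg (dist p.2 q.2)]
  · nlinarith [sq_nonneg (dist p.1 q.1)]

theorem dT_le_two_mul_dist (p q : T2) : dT p q ≤ 2 * dist p q := by
  have h1 : dist p.1 q.1 ≤ dist p q := by rw [Prod.dist_eq]; exact le_max_left _ _
  have h2 : dist p.2 q.2 ≤ dist p q := by rw [Prod.dist_eq]; exact le_max_right _ _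
  rw [dT]
  refine Real.sqrt_le_iff.2 ⟨by positivity, ?_⟩
  nlinarith [dist_nonneg (x := p.1) (y := q.1), dist_nonneg (x := p.2) (y := q.2)]

/-- A sup-metric ball of radius `R` holds at most `9` points at mutual distance more than `R`:
the balls of radius `R / 2` around them are disjoint inside the concentric ball of radius
`3 R / 2`, whose area is `9` times larger. -/
theorem packing {ι : Type*} (s : Finset ι) (v : ι → T2) (x : T2) (R : ℝ) (hR : 0 < R)
    (hR' : 3 * R ≤ 1) (hx : ∀ i ∈ s, dist (v i) x ≤ R)
    (hs : ∀ i ∈ s, ∀ j ∈ s, i ≠ j → R < dist (v i) (v j)) : s.card ≤ 9 := by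
  have hd : Set.PairwiseDisjoint (s : Set ι) fun i => Metric.closedBall (v i) (R / 2) := by
    intro i hi j hj hij
    refine Metric.closedBall_disjoint_closedBall ?_
    linarith [hs i hi j hj hij]
  have h1 := measure_biUnion_finset (μ := volume) hd fun i _ => Metric.isClosed_closedBall.measurableSet
  have h2 : volume (⋃ i ∈ s, Metric.closedBall (v i) (R / 2)) ≤
      volume (Metric.closedBall x (3 * R / 2)) := by
    refine measure_mono (Set.iUnion₂_subset fun i hi => ?_)
    exact Metric.closedBall_subset_closedBall' (by linarith [hx i hi])
  rw [h1, Finset.sum_congr rfl fun i _ =>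
      volume_closedBall_T2 (v i) (R / 2) (by positivity) (by linarith),
    volume_closedBall_T2 x _ (by positivity) (by linarith), Finset.sum_const, nsmul_eq_mul,
    ← ENNReal.ofReal_natCast, ← ENNReal.ofReal_mul (by positivity),
    ENNReal.ofReal_le_ofReal_iff (by positivity)] at h2
  have h3 : (s.card : ℝ) ≤ 9 := by
    by_contra h
    push Not at h
    have : 0 < R ^ 2 := by positivity
    nlinarith
  exact_mod_cast h3

/-! ### Counting isolated points -/

/-- The `i`-th point is isolated at scale `R`: all other points are at distance more than `R` from
it. The distance is the sup metric that the product `T2` carries, not `dT`; since `dist ≤ dT`,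
isolation in this sense implies isolation in `dT`. -/
def IsIso (R : ℝ) {n : ℕ} (ω : Fin n → T2) (i : Fin n) : Prop :=
  ∀ j, j ≠ i → R < dist (ω i) (ω j)

open Classical in
/-- The number of indices isolated at scale `R`, as a real number. -/
noncomputable def isoCount (R : ℝ) {n : ℕ} (ω : Fin n → T2) : ℝ :=
  ((Finset.univ.filter fun i => IsIso R ω i).card : ℝ)

theorem measurableSet_isIso (R : ℝ) {n : ℕ} (i : Fin n) :
    MeasurableSet {ω : Fin n → T2 | IsIso R ω i} := by
  have : {ω : Fin n → T2 | IsIso R ω i} = ⋂ j, ⋂ (_ : j ≠ i), {ω | R < dist (ω i) (ω j)} := by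
    ext ω; simp [IsIso]
  rw [this]
  refine MeasurableSet.iInter fun j => MeasurableSet.iInter fun _ => ?_
  exact (isOpen_lt continuous_const ((continuous_apply i).dist (continuous_apply j))).measurableSet

theorem isoCount_eq_sum (R : ℝ) {n : ℕ} (ω : Fin n → T2) :
    isoCount R ω = ∑ i, Set.indicator {ω : Fin n → T2 | IsIso R ω i} (fun _ => (1 : ℝ)) ω := by
  classical
  simp [isoCount, Set.indicator_apply, Finset.sum_boole]

theorem measurable_isoCount (R : ℝ) (n : ℕ) :
    Measurable (isoCount R : (Fin n → T2) → ℝ) := by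
  rw [show (isoCount R : (Fin n → T2) → ℝ) = _ from funext (isoCount_eq_sum R)]
  exact Finset.measurable_sum _ fun i _ => measurable_const.indicator (measurableSet_isIso R i)

theorem abs_isoCount_le (R : ℝ) {n : ℕ} (ω : Fin n → T2) : |isoCount R ω| ≤ n := by
  rw [isoCount, abs_of_nonneg (by positivity)]
  exact_mod_cast (Finset.card_le_univ _).trans (by simp)

/-- Moving the `i`-th point to `x` destroys the isolation of at most ten indices: `i` itself, and
isolated indices within `R` of `x`, of which there are at most nine by `packing`. -/
theorem isoCount_le_update (R : ℝ) (hR : 0 < R) (hR' : 3 * R ≤ 1) {n : ℕ} (ω : Fin n → T2)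
    (i : Fin n) (x : T2) : isoCount R ω ≤ isoCount R (Function.update ω i x) + 10 := by
  classical
  have hsub : (Finset.univ.filter fun j => IsIso R ω j) ⊆
      (Finset.univ.filter fun j => IsIso R (Function.update ω i x) j) ∪ ({i} ∪
        (Finset.univ.filter fun j => j ≠ i ∧ IsIso R ω j ∧ dist (ω j) x ≤ R)) := by
    intro j hj
    simp only [Finset.mem_filter, Finset.mem_univ, true_and, Finset.mem_union,
      Finset.mem_singleton] at hj ⊢
    by_cases hji : j = i
    · exact Or.inr (Or.inl hji)
    by_cases hd : dist (ω j) x ≤ R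
    · exact Or.inr (Or.inr ⟨hji, hj, hd⟩)
    left
    intro k hk
    rw [Function.update_of_ne hji]
    by_cases hki : k = i
    · subst hki
      rw [Function.update_self]
      exact not_le.1 hd
    · rw [Function.update_of_ne hki]
      exact hj k hk
  have hp : (Finset.univ.filter fun j => j ≠ i ∧ IsIso R ω j ∧ dist (ω j) x ≤ R).card ≤ 9 := by
    refine packing _ ω x R hR hR' (fun j hj => ?_) fun j hj k hk hjk => ?_
    · exact (Finset.mem_filter.1 hj).2.2.2
    · exact (Finset.mem_filter.1 hj).2.2.1 k hjk.symm
  have h := (Finset.card_le_card hsub).trans ((Finset.card_union_le _ _).trans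
    (Nat.add_le_add_left (Finset.card_union_le _ _) _))
  rw [Finset.card_singleton] at h
  rw [isoCount, isoCount]
  have h' : (Finset.univ.filter fun j => IsIso R ω j).card ≤
      (Finset.univ.filter fun j => IsIso R (Function.update ω i x) j).card + 10 := by omega
  exact_mod_cast h'

theorem abs_isoCount_update_sub_le (R : ℝ) (hR : 0 < R) (hR' : 3 * R ≤ 1) {n : ℕ}
    (ω : Fin n → T2) (i : Fin n) (x : T2) :
    |isoCount R (Function.update ω i x) - isoCount R ω| ≤ 10 := by
  have h1 := isoCount_le_update R hR hR' ω i x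
  have h2 := isoCount_le_update R hR hR' (Function.update ω i x) i (ω i)
  rw [Function.update_idem, Function.update_eq_self] at h2
  rw [abs_le]
  constructor <;> linarith

theorem measure_isIso (R : ℝ) (hR : 0 ≤ R) (hR' : 2 * R ≤ 1) (n : ℕ) (i : Fin (n + 1)) :
    (Measure.pi fun _ : Fin (n + 1) => (volume : Measure T2)).real {ω | IsIso R ω i} =
      (1 - 4 * R ^ 2) ^ n := by
  have mp := measurePreserving_piFinSuccAbove (fun _ : Fin (n + 1) => (volume : Measure T2)) i
  have hset : {ω : Fin (n + 1) → T2 | IsIso R ω i} =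
      (MeasurableEquiv.piFinSuccAbove (fun _ => T2) i) ⁻¹'
        {z : T2 × (Fin n → T2) | ∀ j, R < dist z.1 (z.2 j)} := by
    ext ω
    simp only [IsIso, Set.mem_ofPred_eq, Set.mem_preimage]
    constructor
    · intro h j
      exact h _ (Fin.succAbove_ne i j)
    · intro h j hj
      obtain ⟨k, rfl⟩ := Fin.exists_succAbove_eq hj
      exact h k
  have hm : MeasurableSet {z : T2 × (Fin n → T2) | ∀ j, R < dist z.1 (z.2 j)} := by
    rw [Set.ofPred_forall]
    refine MeasurableSet.iInter fun j => ?_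
    exact measurableSet_lt measurable_const
      (measurable_fst.dist ((measurable_pi_apply j).comp measurable_snd))
  have hfib : ∀ x : T2, (Measure.pi fun _ : Fin n => (volume : Measure T2))
      (Prod.mk x ⁻¹' {z : T2 × (Fin n → T2) | ∀ j, R < dist z.1 (z.2 j)}) =
        (1 - ENNReal.ofReal (4 * R ^ 2)) ^ n := by
    intro x
    have : Prod.mk x ⁻¹' {z : T2 × (Fin n → T2) | ∀ j, R < dist z.1 (z.2 j)} =
        Set.univ.pi fun _ => (Metric.closedBall x R)ᶜ := by
      ext y
      simp [dist_comm]
    rw [this, Measure.pi_pi, Finset.prod_const, Finset.card_univ, Fintype.card_fin,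
      prob_compl_eq_one_sub Metric.isClosed_closedBall.measurableSet,
      volume_closedBall_T2 x R hR hR']
  rw [Measure.real, hset, mp.measure_preimage hm.nullMeasurableSet, Measure.prod_apply hm]
  simp_rw [hfib]
  rw [lintegral_const, measure_univ, mul_one, ENNReal.toReal_pow,
    ← ENNReal.ofReal_one, ← ENNReal.ofReal_sub _ (by positivity), ENNReal.toReal_ofReal]
  nlinarith

theorem integral_isoCount (R : ℝ) (hR : 0 ≤ R) (hR' : 2 * R ≤ 1) (n : ℕ) :
    ∫ ω, isoCount R ω ∂(Measure.pi fun _ : Fin (n + 1) => (volume : Measure T2)) =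
      (n + 1) * (1 - 4 * R ^ 2) ^ n := by
  simp_rw [isoCount_eq_sum]
  rw [integral_finsetSum _ fun i _ =>
    (integrable_const _).indicator (measurableSet_isIso R i)]
  simp_rw [integral_indicator (measurableSet_isIso R _), setIntegral_const,
    measure_isIso R hR hR']
  simp

/-- The Voronoi cell of an isolated point contains the sup-metric ball of radius `R / 4` around it:
there `dT x (ω i) ≤ R / 2`, while any other site is at distance at least `3 R / 4`. -/
theorem volume_vor_ge {n : ℕ} (R : ℝ) (hR : 0 ≤ R) (hR' : R ≤ 1) (ω : Fin n → T2) (i : Fin n)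
    (h : IsIso R ω i) : ENNReal.ofReal (R ^ 2 / 4) ≤ volume (vor (ω i) (Set.range ω)) := by
  have := volume_closedBall_T2 (ω i) (R / 4) (by positivity) (by linarith)
  rw [show R ^ 2 / 4 = 4 * (R / 4) ^ 2 by ring, ← this]
  refine measure_mono fun x hx => ?_
  rw [Metric.mem_closedBall] at hx
  rintro _ ⟨j, rfl⟩
  by_cases hj : j = i
  · rw [hj]
  have h1 := h j hj
  have h2 := dT_le_two_mul_dist x (ω i)
  have h3 := dist_le_dT x (ω j)
  have h4 := dist_triangle_left (ω i) (ω j) x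
  linarith

/-- Distinct isolated indices carry distinct points, so `isoCount` bounds from below the number of
points that are isolated in `dT` and have a large Voronoi cell. -/
theorem isoCount_le_ncard {n : ℕ} (R a : ℝ) (hR : 0 ≤ R) (hR' : R ≤ 1) (ha : a ≤ R ^ 2 / 4)
    (ω : Fin n → T2) :
    isoCount R ω ≤ (({p ∈ Set.range ω | (∀ q ∈ Set.range ω, dT q p ≤ R → q = p) ∧
      ENNReal.ofReal a ≤ volume (vor p (Set.range ω))}).ncard : ℝ) := by
  classical
  have hinj : Set.InjOn ω (Finset.univ.filter fun i => IsIso R ω i : Finset (Fin n)) := by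
    intro i hi j hj hij
    by_contra hne
    have := (Finset.mem_filter.1 hi).2 j (Ne.symm hne)
    rw [hij, dist_self] at this
    linarith
  rw [isoCount, ← Finset.card_image_of_injOn hinj, ← Set.ncard_coe_finset, Nat.cast_le]
  refine Set.ncard_le_ncard ?_ ((Set.finite_range ω).subset fun p hp => hp.1)
  intro p hp
  obtain ⟨i, hi, rfl⟩ := Finset.mem_image.1 (Finset.mem_coe.1 hp)
  have hi := (Finset.mem_filter.1 hi).2
  refine ⟨⟨i, rfl⟩, ?_, (ENNReal.ofReal_le_ofReal ha).trans (volume_vor_ge R hR hR' ω i hi)⟩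
  rintro _ ⟨j, rfl⟩ hd
  by_cases hj : j = i
  · rw [hj]
  have h1 := hi j hj
  rw [dist_comm] at h1
  linarith [dist_le_dT (ω j) (ω i)]

/-! ### Numerical estimates -/

theorem exp_neg_two_mul_le {x : ℝ} (h0 : 0 ≤ x) (h1 : x ≤ 1 / 2) :
    Real.exp (-(2 * x)) ≤ 1 - x := by
  rw [Real.exp_neg]
  refine inv_le_of_inv_le₀ (by linarith) ?_
  refine le_trans ?_ (Real.add_one_le_exp (2 * x))
  rw [inv_le_iff_one_le_mul₀ (by linarith)]
  nlinarith

/-- The tail estimate at the scale `R = √(log n / n) / 8`, together with the side conditions on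
`R`. With `s = n ^ (1/8)` the mean of `isoCount R` is at least `s ^ 7`, while the threshold is
`s ^ 4 / 30`; the exponential parameter `1 / (200 s)` then gives the bound
`exp (-s ^ 6 / 800) ≤ exp (-32 log s) = n ^ (-4)`. -/
theorem tail_bound (n : ℕ) (hn : 8 ^ 8 ≤ n) :
    (Measure.pi fun _ : Fin n => (volume : Measure T2)).real
      {ω | isoCount (1 / 8 * Real.sqrt (Real.log n / n)) ω ≤ Real.sqrt n / 30} ≤
        (n : ℝ) ^ (-4 : ℝ) ∧ 3 * (1 / 8 * Real.sqrt (Real.log n / n)) ≤ 1 ∧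
        0 < 1 / 8 * Real.sqrt (Real.log n / n) := by
  obtain ⟨k, rfl⟩ : ∃ k, n = k + 1 := ⟨n - 1, by omega⟩
  set N : ℝ := ((k + 1 : ℕ) : ℝ) with hN
  have hN8 : (8 : ℝ) ^ 8 ≤ N := by rw [hN]; exact_mod_cast hn
  have hN0 : 0 < N := lt_of_lt_of_le (by positivity) hN8
  obtain ⟨s, hs8, hs⟩ : ∃ s : ℝ, 8 ≤ s ∧ s ^ 8 = N := by
    refine ⟨N ^ (1 / 8 : ℝ), ?_, ?_⟩
    · have := Real.rpow_le_rpow (by positivity) hN8 (by norm_num : (0 : ℝ) ≤ 1 / 8)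
      rwa [← Real.rpow_natCast, ← Real.rpow_mul (by norm_num), show ((8 : ℕ) : ℝ) * (1 / 8) = 1 by
        norm_num, Real.rpow_one] at this
    · rw [← Real.rpow_natCast, ← Real.rpow_mul hN0.le]
      norm_num
  have hs0 : 0 < s := by linarith
  have hlog : Real.log N = 8 * Real.log s := by rw [← hs, Real.log_pow]; norm_num
  have hls : Real.log s ≤ s := (Real.log_le_sub_one_of_pos hs0).trans (by linarith)
  have hls0 : 0 < Real.log s := Real.log_pos (by linarith)
  have hsqrt : Real.sqrt N = s ^ 4 := by
    rw [← hs, show s ^ 8 = (s ^ 4) ^ 2 by ring, Real.sqrt_sq (by positivity)]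
  have hs7 : (8 : ℝ) ^ 7 ≤ s ^ 7 := pow_le_pow_left₀ (by norm_num) hs8 7
  have hratio : Real.log N / N ≤ 1 / 8 ^ 6 := by
    rw [div_le_div_iff₀ hN0 (by positivity), hlog, ← hs]
    calc 8 * Real.log s * 8 ^ 6 = 8 ^ 7 * Real.log s := by ring
      _ ≤ s ^ 7 * s := mul_le_mul hs7 hls hls0.le (by positivity)
      _ = 1 * s ^ 8 := by ring
  have hratio0 : 0 < Real.log N / N := by rw [hlog]; positivity
  set R := 1 / 8 * Real.sqrt (Real.log N / N) with hR
  have hR0 : 0 < R := by positivity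
  have hR2 : 4 * R ^ 2 = Real.log N / N / 16 := by
    rw [hR, mul_pow, Real.sq_sqrt hratio0.le]; ring
  have hR3 : 3 * R ≤ 1 := by
    have : R ^ 2 ≤ (1 / 3) ^ 2 := by norm_num at hratio ⊢; linarith
    have := abs_le_of_sq_le_sq this (by norm_num)
    linarith [le_abs_self R]
  refine ⟨?_, hR3, hR0⟩
  have hmean : s ^ 7 ≤
      ∫ ω, isoCount R ω ∂(Measure.pi fun _ : Fin (k + 1) => (volume : Measure T2)) := by
    rw [integral_isoCount R hR0.le (by linarith), hR2]
    have h1 := exp_neg_two_mul_le (x := Real.log N / N / 16) (by positivity)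
      (by norm_num at hratio ⊢; linarith)
    have h2 := pow_le_pow_left₀ (Real.exp_pos _).le h1 k
    rw [← Real.exp_nat_mul] at h2
    have hk : (k : ℝ) + 1 = N := by rw [hN]; push_cast; rfl
    have h3 : Real.exp (-Real.log s) ≤ Real.exp (k * -(2 * (Real.log N / N / 16))) := by
      rw [Real.exp_le_exp]
      have h4 : (k : ℝ) * (Real.log N / N) ≤ 8 * Real.log s := by
        rw [← hlog, ← mul_div_assoc, div_le_iff₀ hN0, mul_comm]
        exact mul_le_mul_of_nonneg_left (by linarith) (by rw [hlog]; positivity)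
      linarith
    rw [Real.exp_neg, Real.exp_log hs0] at h3
    rw [hk]
    calc s ^ 7 = N * s⁻¹ := by rw [← hs]; field_simp
      _ ≤ _ := mul_le_mul_of_nonneg_left (h3.trans h2) hN0.le
  refine (lower_tail (volume : Measure T2) 10 (by norm_num) (k + 1) (isoCount R)
    (measurable_isoCount R _) N (fun ω => abs_isoCount_le R ω)
    (fun ω i x => abs_isoCount_update_sub_le R hR0 hR3 ω i x) (Real.sqrt N / 30)
    (1 / (200 * s)) (by positivity)).trans ?_
  rw [Real.rpow_def_of_pos hN0, Real.exp_le_exp, hsqrt, hlog]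
  have hs4 : s ^ 4 ≤ s ^ 7 := pow_le_pow_right₀ (by linarith) (by norm_num)
  have h5 : (8 : ℝ) ^ 5 ≤ s ^ 5 := pow_le_pow_left₀ (by norm_num) hs8 5
  have hA : N * ((1 / (200 * s)) ^ 2 * 10 ^ 2 / 2) = s ^ 6 / 800 := by
    rw [← hs]; field_simp; norm_num
  have hB : 1 / (200 * s) * (s ^ 7 / 2) = s ^ 6 / 400 := by field_simp; norm_num
  have hM : 1 / (200 * s) * (s ^ 7 / 2) ≤ 1 / (200 * s) *
      (∫ ω, isoCount R ω ∂(Measure.pi fun _ : Fin (k + 1) => (volume : Measure T2)) - s ^ 4 / 30) := by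
    refine mul_le_mul_of_nonneg_left ?_ (by positivity)
    have : 0 < s ^ 7 := by positivity
    linarith
  have h6 : 25600 * s ≤ s ^ 6 := by
    rw [show s ^ 6 = s ^ 5 * s by ring]
    exact mul_le_mul_of_nonneg_right (by norm_num at h5; linarith) hs0.le
  rw [hA]
  rw [hB] at hM
  linarith

/-- There are constants `γ, c₁ > 0` such that for all sufficiently large `n`: if `n` points
are chosen independently and uniformly from the flat unit torus, then with probability at
least `1 - n^{-4}` there are at least `√n/30` points `p` among them such that the closed
ball of radius `c₁ √((log n)/n)` around `p` contains no other chosen point, and the Voronoi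
cell of `p` has area at least `γ (log n)/n`. -/
theorem stmt_12 :
    ∃ γ c₁ : ℝ, 0 < γ ∧ 0 < c₁ ∧ ∃ n₀ : ℕ, ∀ n : ℕ, n₀ ≤ n →
      1 - ENNReal.ofReal ((n : ℝ) ^ (-4 : ℝ)) ≤
        (Measure.pi fun _ : Fin n => (volume : Measure T2))
          {ω : Fin n → T2 |
            Real.sqrt n / 30 ≤
              (({p ∈ Set.range ω |
                  (∀ q ∈ Set.range ω, dT q p ≤ c₁ * Real.sqrt (Real.log n / n) → q = p) ∧
                  ENNReal.ofReal (γ * Real.log n / n) ≤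
                    volume (vor p (Set.range ω))}).ncard : ℝ)} := by
  refine ⟨1 / 256, 1 / 8, by norm_num, by norm_num, 8 ^ 8, fun n hn => ?_⟩
  obtain ⟨htail, hR3, hR0⟩ := tail_bound n hn
  set R := 1 / 8 * Real.sqrt (Real.log n / n) with hR
  set ν := Measure.pi fun _ : Fin n => (volume : Measure T2)
  have hn1 : (1 : ℝ) ≤ n := by
    have : 1 ≤ n := le_trans (by norm_num) hn
    exact_mod_cast this
  have hγ : 1 / 256 * Real.log n / n ≤ R ^ 2 / 4 := by
    rw [hR, mul_pow, Real.sq_sqrt (div_nonneg (Real.log_nonneg hn1) (by linarith))]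
    exact le_of_eq (by ring)
  have hmeas : MeasurableSet {ω : Fin n → T2 | isoCount R ω ≤ Real.sqrt n / 30} :=
    measurableSet_le (measurable_isoCount R n) measurable_const
  calc 1 - ENNReal.ofReal ((n : ℝ) ^ (-4 : ℝ))
      ≤ 1 - ν {ω : Fin n → T2 | isoCount R ω ≤ Real.sqrt n / 30} := by
        refine tsub_le_tsub_left ?_ _
        rw [← ofReal_measureReal]
        exact ENNReal.ofReal_le_ofReal htail
    _ = ν {ω : Fin n → T2 | isoCount R ω ≤ Real.sqrt n / 30}ᶜ :=
        (prob_compl_eq_one_sub hmeas).symm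
    _ ≤ _ := by
        refine measure_mono fun ω hω => ?_
        have hω' : Real.sqrt n / 30 < isoCount R ω := not_le.1 hω
        exact hω'.le.trans (isoCount_le_ncard R _ hR0.le (by linarith) hγ ω)
end
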